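/- Let Σ be a compact metric space and φ : Σ → Σ a homeomorphism. Let Λ ⊊ Σ be a proper closed invariant set (φ(Λ) = Λ) which is not locally maximal, meaning: for every open set U ⊇ Λ there exists a compact invariant set Λ' ⊆ U with Λ' ⊄ Λ. Then the complement Σ \ Λ is not minimal: there exists a point z ∈ Σ \ Λ whose full orbit {φⁿ(z) : n ∈ ℤ} is not dense in Σ \ Λ. -/

import Mathlib

/-! For `p ∉ Λ` the set `{p}ᶜ` is an open neighbourhood of `Λ`, so some closed invariant set
avoids `p` but is not contained in `Λ`. The orbit of a point of that set outside `Λ` never leaves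
the set, hence `p` is not in its closure. -/

section Orbits

variable {X : Type*} {φ : Equiv.Perm X} {C : Set X}

theorem setOf_sameCycle_subset_of_image_eq (hC : φ '' C = C) {z : X} (hz : z ∈ C) :
    {y | φ.SameCycle z y} ⊆ C := by
  rintro _ ⟨n, rfl⟩
  have hbij : Set.BijOn φ C C := φ.image_eq_iff_bijOn.1 hC
  exact (hbij.perm_zpow n).mapsTo hz

variable [TopologicalSpace X]

theorem closure_setOf_sameCycle_subset_of_image_eq (hclosed : IsClosed C) (hC : φ '' C = C)
    {z : X} (hz : z ∈ C) : closure {y | φ.SameCycle z y} ⊆ C :=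
  closure_minimal (setOf_sameCycle_subset_of_image_eq hC hz) hclosed

theorem subset_or_compl_subset_of_forall_subset_closure_sameCycle {Λ : Set X}
    (hmin : ∀ z ∈ Λᶜ, Λᶜ ⊆ closure {y | φ.SameCycle z y})
    (hclosed : IsClosed C) (hC : φ '' C = C) : C ⊆ Λ ∨ Λᶜ ⊆ C := by
  refine or_iff_not_imp_left.2 fun hCΛ => ?_
  obtain ⟨z, hzC, hzΛ⟩ := Set.not_subset.1 hCΛ
  exact (hmin z hzΛ).trans (closure_setOf_sameCycle_subset_of_image_eq hclosed hC hzC)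

end Orbits

theorem not_locallyMaximal_implies_complement_not_minimal_map_general
    {X : Type*} [TopologicalSpace X] [T1Space X] (φ : Equiv.Perm X) (Λ : Set X)
    (hnotmax : ∀ U : Set X, IsOpen U → Λ ⊆ U →
      ∃ C : Set X, IsClosed C ∧ φ '' C = C ∧ C ⊆ U ∧ ¬ C ⊆ Λ) :
    ∃ z ∈ Λᶜ, ¬ (Λᶜ ⊆ closure {y | φ.SameCycle z y}) := by
  by_contra! hmin
  obtain ⟨p, hp⟩ : ∃ p, p ∉ Λ := by
    obtain ⟨C, -, -, -, hCΛ⟩ := hnotmax Set.univ isOpen_univ (Set.subset_univ Λ)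
    exact (Set.not_subset.1 hCΛ).imp fun _ => And.right
  obtain ⟨C, hclosed, hC, hCp, hCΛ⟩ :=
    hnotmax {p}ᶜ isOpen_compl_singleton (Set.subset_compl_singleton_iff.2 hp)
  have hcompl : Λᶜ ⊆ C :=
    (subset_or_compl_subset_of_forall_subset_closure_sameCycle hmin hclosed hC).resolve_left hCΛ
  exact hCp (hcompl hp) rfl

/-- If `Λ` is a proper closed invariant set of a homeomorphism `φ` of a compact metric space
and `Λ` is not locally maximal, then the complement of `Λ` is not minimal: some point of the
complement has non-dense full orbit `{φⁿ z : n ∈ ℤ}` in the complement. -/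
theorem not_locallyMaximal_implies_complement_not_minimal_map
    {X : Type*} [MetricSpace X] [CompactSpace X]
    (φ : X ≃ₜ X)
    (Λ : Set X) (hclosed : IsClosed Λ) (hproper : Λ ≠ Set.univ)
    (hinv : φ '' Λ = Λ)
    (hnotmax : ∀ U : Set X, IsOpen U → Λ ⊆ U →
      ∃ Λ' : Set X, IsCompact Λ' ∧ φ '' Λ' = Λ' ∧ Λ' ⊆ U ∧ ¬ Λ' ⊆ Λ) :
    ∃ z ∈ Λᶜ, ¬ (Λᶜ ⊆ closure {y | ∃ n : ℤ, (φ.toEquiv ^ n) z = y}) :=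
  not_locallyMaximal_implies_complement_not_minimal_map_general φ.toEquiv Λ fun U hU hΛU =>
    (hnotmax U hU hΛU).imp fun _ hΛ' => hΛ'.imp_left IsCompact.isClosed
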